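/- Let K be a field of characteristic zero with a derivation ∂ : K → K, let t ∈ K satisfy ∂t = 1, and let α ∈ K be a constant (∂α = 0) with α ≠ 1/2. Let z ∈ K be a solution of the second Painlevé equation P_II(α), i.e. ∂(∂z) = 2z³ + t·z + α (so that ∂z - z² - t/2 ≠ 0), and set w = T₋(z) = -z + (α - 1/2)/(∂z - z² - t/2). Then ∂w + w² + t/2 ≠ 0 and T₊ applied to w with parameter α - 1, namely -w - ((α - 1) + 1/2)/(∂w + w² + t/2), equals z. In particular the Bäcklund transformation T₋ defines a bijection from the set of solutions of P_II(α) in K onto the set of solutions of P_II(α - 1) in K, with inverse T₊. -/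

import Mathlib

/-!
For a solution `z` of `P_II(α)` the denominator `F = ∂z - z² - t/2` of `T₋` satisfies the linear
equation `∂F = -2zF + (α - 1/2)`, which is in fact equivalent to `P_II(α)`; in particular `F = 0`
would force `α = 1/2`. Differentiating `w = -z + (α - 1/2)/F` with this equation shows that the
denominator of `T₊` at `w` is `-F`. Hence `T₊` undoes `T₋`, and the linear equation for `F` becomes
the one characterizing the solutions `w` of `P_II(α - 1)`. The symmetry `z ↦ -z` between `P_II(α)`
and `P_II(-α)` exchanges `T₊` and `T₋`, so `T₋` also undoes `T₊`.
-/

namespace PainleveII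

variable {R K : Type*} [CommRing R] [Field K] [Algebra R K] {D : Derivation R K K}
  {t α u : K}

/-- The second Painlevé equation `P_II(α)` for `u`, in the field `K` with derivation `D` and
independent variable `t`. -/
def IsSolution (D : Derivation R K K) (t α u : K) : Prop :=
  D (D u) = 2 * u ^ 3 + t * u + α

/-- The denominator of the Bäcklund transformation `T₊`; its vanishing is the Riccati equation that
defines the classical (Airy) solutions of `P_II(-1/2)`. -/
def riccatiPlus (D : Derivation R K K) (t u : K) : K :=
  D u + u ^ 2 + t / 2

/-- The denominator of the Bäcklund transformation `T₋`; its vanishing is the Riccati equation that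
defines the classical (Airy) solutions of `P_II(1/2)`. -/
def riccatiMinus (D : Derivation R K K) (t u : K) : K :=
  D u - u ^ 2 - t / 2

/-- The Bäcklund transformation `T₊` from `P_II(α)` to `P_II(α + 1)`, with value `-u` where its
denominator vanishes. -/
def backlundPlus (D : Derivation R K K) (t α u : K) : K :=
  -u - (α + 1 / 2) / riccatiPlus D t u

/-- The Bäcklund transformation `T₋` from `P_II(α)` to `P_II(α - 1)`, with value `-u` where its
denominator vanishes. -/
def backlundMinus (D : Derivation R K K) (t α u : K) : K :=
  -u + (α - 1 / 2) / riccatiMinus D t u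

theorem isSolution_neg_iff : IsSolution D t (-α) (-u) ↔ IsSolution D t α u := by
  simp only [IsSolution, map_neg]
  constructor <;> intro h <;> linear_combination -h

theorem riccatiMinus_neg : riccatiMinus D t (-u) = -riccatiPlus D t u := by
  simp only [riccatiMinus, riccatiPlus, map_neg]
  ring

theorem backlundMinus_neg : backlundMinus D t (-α) (-u) = -backlundPlus D t α u := by
  rw [backlundMinus, backlundPlus, riccatiMinus_neg]
  ring

theorem backlundPlus_neg : backlundPlus D t (-α) (-u) = -backlundMinus D t α u := by
  rw [← neg_neg (backlundPlus D t (-α) (-u)), ← backlundMinus_neg, neg_neg, neg_neg]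

theorem derivation_div_two (D : Derivation R K K) (x : K) : D (x / 2) = D x / 2 := by
  have h_two : D (2 : K) = 0 := D.map_natCast 2
  rw [D.leibniz_div_const _ _ h_two, smul_eq_mul, inv_mul_eq_div]

theorem derivation_sub_half (hα : D α = 0) : D (α - 1 / 2) = 0 := by
  rw [map_sub, derivation_div_two, hα, D.map_one_eq_zero, zero_div, sub_zero]

theorem derivation_riccatiMinus (ht : D t = 1) :
    D (riccatiMinus D t u) = D (D u) - 2 * u * D u - 1 / 2 := by
  rw [riccatiMinus, map_sub, map_sub, derivation_div_two, ht, D.leibniz_pow]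
  simp only [nsmul_eq_mul, smul_eq_mul, Nat.cast_ofNat]
  ring

theorem derivation_backlundMinus (hα : D α = 0) :
    D (backlundMinus D t α u) =
      -D u - (α - 1 / 2) * D (riccatiMinus D t u) / riccatiMinus D t u ^ 2 := by
  rw [backlundMinus, map_add, map_neg, D.leibniz_div, derivation_sub_half hα]
  simp only [smul_eq_mul]
  ring

variable [NeZero (2 : K)]

theorem isSolution_iff_derivation_riccatiMinus (ht : D t = 1) :
    IsSolution D t α u ↔
      D (riccatiMinus D t u) = -2 * u * riccatiMinus D t u + (α - 1 / 2) := by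
  have t_eq : 2 * (t / 2) = t := mul_div_cancel₀ t two_ne_zero
  rw [derivation_riccatiMinus ht, IsSolution, riccatiMinus]
  constructor <;> intro h
  · linear_combination h - u * t_eq
  · linear_combination h + u * t_eq

theorem isSolution_iff_derivation_riccatiPlus (ht : D t = 1) :
    IsSolution D t α u ↔
      D (riccatiPlus D t u) = 2 * u * riccatiPlus D t u + (α + 1 / 2) := by
  rw [← isSolution_neg_iff, isSolution_iff_derivation_riccatiMinus ht, riccatiMinus_neg, map_neg]
  constructor <;> intro h <;> linear_combination -h

namespace IsSolution

theorem riccatiMinus_ne_zero (h : IsSolution D t α u) (ht : D t = 1) (hα_ne : α ≠ 1 / 2) :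
    riccatiMinus D t u ≠ 0 := by
  intro h_zero
  have h_linear := (isSolution_iff_derivation_riccatiMinus ht).1 h
  rw [h_zero, map_zero, mul_zero, zero_add] at h_linear
  exact hα_ne (sub_eq_zero.1 h_linear.symm)

theorem riccatiPlus_backlundMinus (h : IsSolution D t α u) (ht : D t = 1) (hα : D α = 0)
    (hα_ne : α ≠ 1 / 2) :
    riccatiPlus D t (backlundMinus D t α u) = -riccatiMinus D t u := by
  have hF := h.riccatiMinus_ne_zero ht hα_ne
  calc riccatiPlus D t (backlundMinus D t α u)
      = -D u - (α - 1 / 2) * (-2 * u * riccatiMinus D t u + (α - 1 / 2)) / riccatiMinus D t u ^ 2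
          + (-u + (α - 1 / 2) / riccatiMinus D t u) ^ 2 + t / 2 := by
        rw [riccatiPlus, derivation_backlundMinus hα,
          (isSolution_iff_derivation_riccatiMinus ht).1 h, backlundMinus]
    _ = -D u + u ^ 2 + t / 2 := by
        field_simp
        ring
    _ = -riccatiMinus D t u := by rw [riccatiMinus]; ring

protected theorem backlundMinus (h : IsSolution D t α u) (ht : D t = 1) (hα : D α = 0)
    (hα_ne : α ≠ 1 / 2) : IsSolution D t (α - 1) (backlundMinus D t α u) := by
  have hF := h.riccatiMinus_ne_zero ht hα_ne
  have h_cancel : (α - 1 / 2) / riccatiMinus D t u * riccatiMinus D t u = α - 1 / 2 :=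
    div_mul_cancel₀ _ hF
  rw [isSolution_iff_derivation_riccatiPlus ht, h.riccatiPlus_backlundMinus ht hα hα_ne, map_neg,
    (isSolution_iff_derivation_riccatiMinus ht).1 h, backlundMinus]
  linear_combination 2 * h_cancel - add_halves (1 : K)

theorem backlundPlus_backlundMinus (h : IsSolution D t α u) (ht : D t = 1) (hα : D α = 0)
    (hα_ne : α ≠ 1 / 2) : backlundPlus D t (α - 1) (backlundMinus D t α u) = u := by
  have h_half : α - 1 + 1 / 2 = α - 1 / 2 := by linear_combination add_halves (1 : K)
  rw [backlundPlus, h.riccatiPlus_backlundMinus ht hα hα_ne, h_half, backlundMinus]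
  ring

protected theorem backlundPlus (h : IsSolution D t α u) (ht : D t = 1) (hα : D α = 0)
    (hα_ne : α ≠ -(1 / 2)) : IsSolution D t (α + 1) (backlundPlus D t α u) := by
  have h_neg := (isSolution_neg_iff.2 h).backlundMinus ht (by rw [map_neg, hα, neg_zero])
    (mt neg_eq_iff_eq_neg.1 hα_ne)
  rwa [backlundMinus_neg, ← neg_add', isSolution_neg_iff] at h_neg

theorem backlundMinus_backlundPlus (h : IsSolution D t α u) (ht : D t = 1) (hα : D α = 0)
    (hα_ne : α ≠ -(1 / 2)) :
    backlundMinus D t (α + 1) (backlundPlus D t α u) = u := by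
  have h_neg := (isSolution_neg_iff.2 h).backlundPlus_backlundMinus ht
    (by rw [map_neg, hα, neg_zero]) (mt neg_eq_iff_eq_neg.1 hα_ne)
  rwa [backlundMinus_neg, ← neg_add', backlundPlus_neg, neg_inj] at h_neg

end IsSolution

theorem bijOn_backlundMinus (ht : D t = 1) (hα : D α = 0) (hα_ne : α ≠ 1 / 2) :
    Set.BijOn (backlundMinus D t α) {u | IsSolution D t α u} {u | IsSolution D t (α - 1) u} := by
  have hβ : D (α - 1) = 0 := by rw [map_sub, hα, D.map_one_eq_zero, sub_zero]
  have hβ_ne : α - 1 ≠ -(1 / 2) := fun h ↦ hα_ne (by linear_combination h - add_halves (1 : K))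
  refine Set.InvOn.bijOn (f' := backlundPlus D t (α - 1)) ⟨?left_inv, ?right_inv⟩ ?maps ?maps_inv
  case left_inv => exact fun u hu ↦ hu.backlundPlus_backlundMinus ht hα hα_ne
  case right_inv =>
    intro u hu
    simpa only [sub_add_cancel] using hu.backlundMinus_backlundPlus ht hβ hβ_ne
  case maps => exact fun u hu ↦ hu.backlundMinus ht hα hα_ne
  case maps_inv =>
    intro u hu
    simpa only [Set.mem_ofPred_eq, sub_add_cancel] using hu.backlundPlus ht hβ hβ_ne

end PainleveII

open PainleveII in
theorem PII_Tminus_bijection_general {R K : Type*} [CommRing R] [Field K] [Algebra R K]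
    [NeZero (2 : K)] {D : Derivation R K K} {t α z : K}
    (ht : D t = 1) (hα : D α = 0) (hα_ne : α ≠ 1 / 2) (hz : IsSolution D t α z) :
    riccatiMinus D t z ≠ 0 ∧
    riccatiPlus D t (backlundMinus D t α z) ≠ 0 ∧
    backlundPlus D t (α - 1) (backlundMinus D t α z) = z ∧
    Set.BijOn (backlundMinus D t α) {u | IsSolution D t α u} {u | IsSolution D t (α - 1) u} := by
  have hF := hz.riccatiMinus_ne_zero ht hα_ne
  refine ⟨hF, ?_, hz.backlundPlus_backlundMinus ht hα hα_ne, bijOn_backlundMinus ht hα hα_ne⟩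
  rw [hz.riccatiPlus_backlundMinus ht hα hα_ne]
  exact neg_ne_zero.2 hF

/-- For `α ≠ 1/2` and `z` a solution of `P_II(α)`, the denominator
of `T₋` does not vanish at `z`; setting `w = T₋(z)`, the denominator of `T₊`
(with parameter `α - 1`) does not vanish at `w` and `T₊(w) = z`.  In particular
`T₋` is a bijection from the solution set of `P_II(α)` in `K` onto the solution
set of `P_II(α - 1)` in `K`, with inverse `T₊`. -/
theorem PII_Tminus_bijection {K : Type*} [Field K] [CharZero K]
    (D : Derivation ℚ K K) (t α z w : K)
    (ht : D t = 1) (hα : D α = 0) (hαne : α ≠ 1 / 2)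
    (hz : D (D z) = 2 * z ^ 3 + t * z + α)
    (hw : w = -z + (α - 1 / 2) / (D z - z ^ 2 - t / 2)) :
    D z - z ^ 2 - t / 2 ≠ 0 ∧
    D w + w ^ 2 + t / 2 ≠ 0 ∧
    -w - ((α - 1) + 1 / 2) / (D w + w ^ 2 + t / 2) = z ∧
    Set.BijOn (fun u => -u + (α - 1 / 2) / (D u - u ^ 2 - t / 2))
      {u | D (D u) = 2 * u ^ 3 + t * u + α}
      {u | D (D u) = 2 * u ^ 3 + t * u + (α - 1)} := by
  subst hw
  exact PII_Tminus_bijection_general ht hα hαne hz
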